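/- arXiv:2007.10475 — 3 statements merged into one kernel-verified Lean document; each statement's English description precedes it below -/
import Mathlib

section
/- Let $I=(a,b)$ be a bounded interval and $2 \le p \le \infty$. Then there exists a constant $C = C(|I|,p) > 0$ such that for every function $u$ twice continuously differentiable on $[a,b]$ with $u(a)=u(b)=0$, one has $\|u'\|_{L^p(I)} \le C\, \|u''\|_{L^2(I)}^{\frac{1}{2}-\frac{1}{p}} \|u'\|_{L^2(I)}^{\frac{1}{2}+\frac{1}{p}}$. -/
open MeasureTheory Set
open scoped ENNReal

/-!
By Rolle's theorem `u'` vanishes somewhere in `[a, b]`. Integrating `(u' ^ 2)' = 2 u' u''` from that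
point and applying the Cauchy-Schwarz inequality bounds `‖u'‖_∞ ^ 2` by `2 ‖u'‖_2 ‖u''‖_2`, and
interpolating `L^p` between `L^2` and `L^∞` gives the estimate.
-/

lemma eLpNorm_le_eLpNorm_top_rpow_mul_eLpNorm_rpow {α ε : Type*} [MeasurableSpace α]
    {μ : Measure α} [TopologicalSpace ε] [ContinuousENorm ε] {f : α → ε} {p q : ℝ≥0∞}
    (hf : AEStronglyMeasurable f μ) (hq : q ≠ 0) (hqp : q ≤ p) :
    eLpNorm f p μ ≤
      eLpNorm f ∞ μ ^ (1 - q.toReal / p.toReal) * eLpNorm f q μ ^ (q.toReal / p.toReal) := by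
  obtain rfl | hp_top := eq_or_ne p ∞
  · simp
  have hp : p ≠ 0 := (hq.bot_lt.trans_le hqp).ne'
  have hq_top : q ≠ ∞ := ne_top_of_le_ne_top hp_top hqp
  have hp_pos : 0 < p.toReal := ENNReal.toReal_pos hp hp_top
  have hq_pos : 0 < q.toReal := ENNReal.toReal_pos hq hq_top
  have hqp_real : q.toReal ≤ p.toReal := ENNReal.toReal_mono hp_top hqp
  set M := eLpNorm f ∞ μ
  have pointwise : ∀ᵐ x ∂μ,
      ‖f x‖ₑ ^ p.toReal ≤ M ^ (p.toReal - q.toReal) * ‖f x‖ₑ ^ q.toReal := by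
    filter_upwards [enorm_ae_le_eLpNormEssSup f μ] with x hx
    calc ‖f x‖ₑ ^ p.toReal = ‖f x‖ₑ ^ (p.toReal - q.toReal) * ‖f x‖ₑ ^ q.toReal := by
          rw [← ENNReal.rpow_add_of_nonneg _ _ (sub_nonneg.2 hqp_real) hq_pos.le, sub_add_cancel]
      _ ≤ M ^ (p.toReal - q.toReal) * ‖f x‖ₑ ^ q.toReal := by
          gcongr
          exact hx
  rw [eLpNorm_eq_lintegral_rpow_enorm_toReal hp hp_top,
    eLpNorm_eq_lintegral_rpow_enorm_toReal hq hq_top]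
  calc (∫⁻ x, ‖f x‖ₑ ^ p.toReal ∂μ) ^ (1 / p.toReal)
      ≤ (M ^ (p.toReal - q.toReal) * ∫⁻ x, ‖f x‖ₑ ^ q.toReal ∂μ) ^ (1 / p.toReal) := by
        gcongr
        exact (lintegral_mono_ae pointwise).trans_eq
          (lintegral_const_mul'' _ (hf.enorm.pow_const _))
    _ = M ^ (1 - q.toReal / p.toReal) *
          ((∫⁻ x, ‖f x‖ₑ ^ q.toReal ∂μ) ^ (1 / q.toReal)) ^ (q.toReal / p.toReal) := by
        rw [ENNReal.mul_rpow_of_nonneg _ _ (by positivity), ← ENNReal.rpow_mul,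
          ← ENNReal.rpow_mul]
        congr 2 <;> field_simp

lemma lintegral_enorm_mul_le_eLpNorm_mul_eLpNorm {α 𝕜 : Type*} [MeasurableSpace α]
    {μ : Measure α} [NormedDivisionRing 𝕜] {f g : α → 𝕜} {p q : ℝ≥0∞} [ENNReal.HolderConjugate p q]
    (hf : AEStronglyMeasurable f μ) (hg : AEStronglyMeasurable g μ) :
    ∫⁻ x, ‖f x‖ₑ * ‖g x‖ₑ ∂μ ≤ eLpNorm f p μ * eLpNorm g q μ := by
  simpa only [eLpNorm_one_eq_lintegral_enorm, smul_eq_mul, Pi.mul_apply, enorm_mul] using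
    eLpNorm_smul_le_mul_eLpNorm (p := p) (q := q) (r := 1) hg hf

section AbsolutelyContinuous

variable {f : ℝ → ℝ} {a b c x : ℝ}

lemma aestronglyMeasurable_of_absolutelyContinuousOnInterval
    (hf : AbsolutelyContinuousOnInterval f a b) :
    AEStronglyMeasurable f (volume.restrict (uIoc a b)) :=
  (hf.continuousOn.mono uIoc_subset_uIcc).aestronglyMeasurable measurableSet_uIoc

lemma enorm_sq_sub_sq_le_lintegral_enorm_mul_deriv (hf : AbsolutelyContinuousOnInterval f c x) :
    ‖f x ^ 2 - f c ^ 2‖ₑ ≤ 2 * ∫⁻ y in uIoc c x, ‖f y‖ₑ * ‖deriv f y‖ₑ := by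
  have ftc : ∫ y in c..x, 2 * (f y * deriv f y) = f x ^ 2 - f c ^ 2 := by
    rw [sq, sq, ← hf.integral_deriv_mul_eq_sub hf]
    congr 1 with y
    ring
  calc ‖f x ^ 2 - f c ^ 2‖ₑ = ‖∫ y in uIoc c x, 2 * (f y * deriv f y)‖ₑ := by
        rw [← ftc, ← enorm_norm, intervalIntegral.norm_integral_eq_norm_integral_uIoc, enorm_norm]
    _ ≤ ∫⁻ y in uIoc c x, ‖2 * (f y * deriv f y)‖ₑ := enorm_integral_le_lintegral_enorm _
    _ = 2 * ∫⁻ y in uIoc c x, ‖f y‖ₑ * ‖deriv f y‖ₑ := by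
        rw [← lintegral_const_mul' _ _ ENNReal.ofNat_ne_top]
        simp [enorm_mul, Real.enorm_eq_ofReal]

lemma enorm_sq_le_two_mul_eLpNorm_mul_eLpNorm_deriv {p q : ℝ≥0∞} [ENNReal.HolderConjugate p q]
    (hf : AbsolutelyContinuousOnInterval f a b) (hc : c ∈ uIcc a b) (hfc : f c = 0)
    (hx : x ∈ uIcc a b) :
    ‖f x‖ₑ ^ 2 ≤ 2 * (eLpNorm f p (volume.restrict (uIoc a b)) *
      eLpNorm (deriv f) q (volume.restrict (uIoc a b))) := by
  have hcx : uIcc c x ⊆ uIcc a b := uIcc_subset_uIcc hc hx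
  calc ‖f x‖ₑ ^ 2 = ‖f x ^ 2 - f c ^ 2‖ₑ := by simp [hfc, enorm_pow]
    _ ≤ 2 * ∫⁻ y in uIoc c x, ‖f y‖ₑ * ‖deriv f y‖ₑ :=
        enorm_sq_sub_sq_le_lintegral_enorm_mul_deriv (hf.mono hcx)
    _ ≤ 2 * ∫⁻ y in uIoc a b, ‖f y‖ₑ * ‖deriv f y‖ₑ := by
        gcongr
        exact uIoc_subset_uIoc_of_uIcc_subset_uIcc hcx
    _ ≤ _ := by
        gcongr
        exact lintegral_enorm_mul_le_eLpNorm_mul_eLpNorm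
          (aestronglyMeasurable_of_absolutelyContinuousOnInterval hf)
          (aestronglyMeasurable_deriv f _)

lemma eLpNorm_top_sq_le_two_mul_eLpNorm_mul_eLpNorm_deriv {p q : ℝ≥0∞}
    [ENNReal.HolderConjugate p q] (hf : AbsolutelyContinuousOnInterval f a b) (hc : c ∈ uIcc a b)
    (hfc : f c = 0) :
    eLpNorm f ∞ (volume.restrict (uIoc a b)) ^ 2 ≤
      2 * (eLpNorm f p (volume.restrict (uIoc a b)) *
        eLpNorm (deriv f) q (volume.restrict (uIoc a b))) := by
  rw [← ENNReal.rpow_two, ← ENNReal.le_rpow_inv_iff two_pos, eLpNorm_exponent_top]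
  refine eLpNormEssSup_le_of_ae_enorm_bound ?_
  filter_upwards [ae_restrict_mem measurableSet_uIoc] with x hx
  rw [ENNReal.le_rpow_inv_iff two_pos, ENNReal.rpow_two]
  exact enorm_sq_le_two_mul_eLpNorm_mul_eLpNorm_deriv hf hc hfc (uIoc_subset_uIcc hx)

theorem eLpNorm_le_eLpNorm_deriv_rpow_mul_eLpNorm_rpow {p : ℝ≥0∞} (hp : 2 ≤ p)
    (hf : AbsolutelyContinuousOnInterval f a b) (hc : c ∈ uIcc a b) (hfc : f c = 0) :
    eLpNorm f p (volume.restrict (uIoc a b)) ≤ 2 ^ (1 / 2 - 1 / p.toReal) *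
      eLpNorm (deriv f) 2 (volume.restrict (uIoc a b)) ^ (1 / 2 - 1 / p.toReal) *
      eLpNorm f 2 (volume.restrict (uIoc a b)) ^ (1 / 2 + 1 / p.toReal) := by
  have hθ : 0 ≤ 1 / 2 - 1 / p.toReal := by
    obtain rfl | hp_top := eq_or_ne p ∞
    · simp
    · have : 2 ≤ p.toReal := by simpa using ENNReal.toReal_mono hp_top hp
      exact sub_nonneg.2 (one_div_le_one_div_of_le two_pos this)
  set θ := 1 / 2 - 1 / p.toReal with hθ_def
  set μ := volume.restrict (uIoc a b)
  calc eLpNorm f p μ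
      ≤ eLpNorm f ∞ μ ^ (1 - 2 / p.toReal) * eLpNorm f 2 μ ^ (2 / p.toReal) := by
        simpa using eLpNorm_le_eLpNorm_top_rpow_mul_eLpNorm_rpow
          (aestronglyMeasurable_of_absolutelyContinuousOnInterval hf) two_ne_zero hp
    _ = (eLpNorm f ∞ μ ^ 2) ^ θ * eLpNorm f 2 μ ^ (2 / p.toReal) := by
        rw [← ENNReal.rpow_two, ← ENNReal.rpow_mul,
          show 2 * θ = 1 - 2 / p.toReal by rw [hθ_def]; ring]
    _ ≤ (2 * (eLpNorm f 2 μ * eLpNorm (deriv f) 2 μ)) ^ θ * eLpNorm f 2 μ ^ (2 / p.toReal) := by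
        gcongr
        exact eLpNorm_top_sq_le_two_mul_eLpNorm_mul_eLpNorm_deriv hf hc hfc
    _ = 2 ^ θ * eLpNorm (deriv f) 2 μ ^ θ *
          (eLpNorm f 2 μ ^ θ * eLpNorm f 2 μ ^ (2 / p.toReal)) := by
        rw [ENNReal.mul_rpow_of_nonneg _ _ hθ, ENNReal.mul_rpow_of_nonneg _ _ hθ]
        ring
    _ = 2 ^ θ * eLpNorm (deriv f) 2 μ ^ θ * eLpNorm f 2 μ ^ (1 / 2 + 1 / p.toReal) := by
        rw [← ENNReal.rpow_add_of_nonneg _ _ hθ (by positivity),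
          show θ + 2 / p.toReal = 1 / 2 + 1 / p.toReal by rw [hθ_def]; ring]

end AbsolutelyContinuous

lemma exists_derivWithin_Icc_eq_zero {u : ℝ → ℝ} {a b : ℝ} (hab : a < b)
    (hu : ContinuousOn u (Icc a b)) (h : u a = u b) :
    ∃ c ∈ Ioo a b, derivWithin u (Icc a b) c = 0 := by
  obtain ⟨c, hc, huc⟩ := exists_deriv_eq_zero hab hu h
  exact ⟨c, hc, by rw [derivWithin_of_mem_nhds (Icc_mem_nhds hc.1 hc.2), huc]⟩

lemma eLpNorm_derivWithin_Icc_eq_eLpNorm_deriv (f : ℝ → ℝ) (a b : ℝ) (p : ℝ≥0∞) :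
    eLpNorm (derivWithin f (Icc a b)) p (volume.restrict (Ioo a b)) =
      eLpNorm (deriv f) p (volume.restrict (Ioo a b)) := by
  refine eLpNorm_congr_ae ?_
  filter_upwards [ae_restrict_mem measurableSet_Ioo] with x hx
  exact derivWithin_of_mem_nhds (Icc_mem_nhds hx.1 hx.2)

lemma absolutelyContinuousOnInterval_derivWithin_Icc {E : Type*} [NormedAddCommGroup E]
    [NormedSpace ℝ E] {u : ℝ → E} {a b : ℝ} (hab : a < b) (hu : ContDiffOn ℝ 2 u (Icc a b)) :
    AbsolutelyContinuousOnInterval (derivWithin u (Icc a b)) a b := by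
  have hu' : ContDiffOn ℝ 1 (derivWithin u (Icc a b)) (Icc a b) :=
    hu.derivWithin (uniqueDiffOn_Icc hab) one_add_one_eq_two.le
  rw [← uIcc_of_le hab.le] at hu' ⊢
  exact hu'.absolutelyContinuousOnInterval

theorem interpolation_deriv_two_general {p : ℝ≥0∞} (hp : 2 ≤ p) {a b : ℝ} (hab : a < b)
    {u : ℝ → ℝ} (hu : DifferentiableOn ℝ u (Icc a b))
    (hu' : AbsolutelyContinuousOnInterval (derivWithin u (Icc a b)) a b) (h : u a = u b) :
    eLpNorm (derivWithin u (Icc a b)) p (volume.restrict (Ioo a b)) ≤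
      ENNReal.ofReal (2 ^ (1 / 2 - 1 / p.toReal)) *
        (eLpNorm (derivWithin (derivWithin u (Icc a b)) (Icc a b)) 2
          (volume.restrict (Ioo a b))) ^ (1 / 2 - 1 / p.toReal) *
        (eLpNorm (derivWithin u (Icc a b)) 2
          (volume.restrict (Ioo a b))) ^ (1 / 2 + 1 / p.toReal) := by
  obtain ⟨c, hc, hu'c⟩ := exists_derivWithin_Icc_eq_zero hab hu.continuousOn h
  have hc' : c ∈ uIcc a b := Icc_subset_uIcc (Ioo_subset_Icc_self hc)
  have hμ : volume.restrict (uIoc a b) = volume.restrict (Ioo a b) := by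
    rw [uIoc_of_le hab.le, restrict_Ioo_eq_restrict_Ioc]
  rw [eLpNorm_derivWithin_Icc_eq_eLpNorm_deriv (derivWithin u (Icc a b)),
    ← ENNReal.ofReal_rpow_of_pos two_pos, ENNReal.ofReal_ofNat, ← hμ]
  exact eLpNorm_le_eLpNorm_deriv_rpow_mul_eLpNorm_rpow hp hu' hc' hu'c

/-- **Remark 3.9 / inequality (3.15)**: for a bounded interval `I = (a, b)` and `2 ≤ p ≤ ∞`
there is a constant `C = C(|I|, p) > 0` such that for every `u` twice continuously
differentiable on `[a, b]` with `u a = u b = 0`,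
`‖u'‖_{L^p(I)} ≤ C ‖u''‖_{L^2(I)}^{1/2 - 1/p} ‖u'‖_{L^2(I)}^{1/2 + 1/p}`. -/
theorem interpolation_deriv_two (p : ℝ≥0∞) (hp : 2 ≤ p) (a b : ℝ) (hab : a < b) :
    ∃ C > (0:ℝ), ∀ u : ℝ → ℝ, ContDiffOn ℝ 2 u (Icc a b) → u a = 0 → u b = 0 →
      eLpNorm (derivWithin u (Icc a b)) p (volume.restrict (Ioo a b)) ≤
        ENNReal.ofReal C *
          (eLpNorm (derivWithin (derivWithin u (Icc a b)) (Icc a b)) 2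
            (volume.restrict (Ioo a b))) ^ (1 / 2 - 1 / p.toReal) *
          (eLpNorm (derivWithin u (Icc a b)) 2
            (volume.restrict (Ioo a b))) ^ (1 / 2 + 1 / p.toReal) := by
  exact ⟨2 ^ (1 / 2 - 1 / p.toReal), by positivity, fun _ hu ha hb ↦
    interpolation_deriv_two_general hp hab (hu.differentiableOn two_ne_zero)
      (absolutelyContinuousOnInterval_derivWithin_Icc hab hu) (ha.trans hb.symm)⟩
end

section
/- There exists a constant $C>0$ such that for every function $g$ three times continuously differentiable on $[-1,1]$ with $g(-1)=g(1)=0$, one has $\left(\int_{-1}^{1} (1-y^2)\, g''(y)^2\, dy\right)^{1/2} \le C\, E(g)^{1/4}\, D(g)^{1/4}$. -/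
open MeasureTheory Set
open scoped ENNReal

/-- Derivative on the interval `[-1, 1]`. -/
noncomputable def dI (f : ℝ → ℝ) : ℝ → ℝ := derivWithin f (Icc (-1) 1)

/-- The energy `E(g) = (1/2) ∫_{-1}^{1} g'(y)^2 dy`. -/
noncomputable def energy (g : ℝ → ℝ) : ℝ :=
  (1/2) * ∫ y in Ioo (-1:ℝ) 1, (dI g y) ^ 2

/-- The dissipation `D(g) = 8 ∫_{-1}^{1} g''(y)^2 dy + (1/2) ∫_{-1}^{1} (1-y^2) g'''(y)^2 dy`. -/
noncomputable def dissipation (g : ℝ → ℝ) : ℝ :=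
  8 * (∫ y in Ioo (-1:ℝ) 1, (dI (dI g) y) ^ 2)
    + (1/2) * ∫ y in Ioo (-1:ℝ) 1, (1 - y ^ 2) * (dI (dI (dI g)) y) ^ 2

/-!
Integrating by parts against a weight `p` that vanishes at the endpoints leaves no boundary term:
`∫ p u'² = -∫ u (p u')'`. The Cauchy–Schwarz inequality then bounds `(∫ p u'²)²` by `∫ u²` times
`∫ ((p u')')²`, and with `u = g'`, `p = 1 - y²` the last integral is controlled by the dissipation,
because `p'` is bounded and `p² ≤ p`.
-/

section Interpolation

theorem sq_integral_mul_le {α : Type*} {m : MeasurableSpace α} {μ : Measure α} {f g : α → ℝ}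
    (hf : MemLp f 2 μ) (hg : MemLp g 2 μ) :
    (∫ x, f x * g x ∂μ) ^ 2 ≤ (∫ x, f x ^ 2 ∂μ) * ∫ x, g x ^ 2 ∂μ := by
  have hfg : Integrable (fun x => f x * g x) μ := hf.integrable_mul hg
  have quadratic_nonneg (t : ℝ) : 0 ≤ (∫ x, f x ^ 2 ∂μ) * (t * t)
      + (2 * ∫ x, f x * g x ∂μ) * t + ∫ x, g x ^ 2 ∂μ :=
    calc 0 ≤ ∫ x, (t * f x + g x) ^ 2 ∂μ := integral_nonneg fun x => sq_nonneg _
      _ = ∫ x, (t * t) * f x ^ 2 + (2 * t) * (f x * g x) + g x ^ 2 ∂μ := by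
          congr 1 with x
          ring
      _ = _ := by
          have hff_int := hf.integrable_sq.const_mul (t * t)
          have hfg_int := hfg.const_mul (2 * t)
          have hsum_int : Integrable (fun x => (t * t) * f x ^ 2 + (2 * t) * (f x * g x)) μ :=
            hff_int.add hfg_int
          rw [integral_add hsum_int hg.integrable_sq, integral_add hff_int hfg_int,
            integral_const_mul, integral_const_mul]
          ring
  have discrim_nonpos := discrim_le_zero quadratic_nonneg
  rw [discrim] at discrim_nonpos
  linarith

theorem sq_intervalIntegral_mul_le {a b : ℝ} {f g : ℝ → ℝ} (hab : a ≤ b)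
    (hf : ContinuousOn f (Icc a b)) (hg : ContinuousOn g (Icc a b)) :
    (∫ x in a..b, f x * g x) ^ 2 ≤ (∫ x in a..b, f x ^ 2) * ∫ x in a..b, g x ^ 2 := by
  have memLp_two {h : ℝ → ℝ} (hh : ContinuousOn h (Icc a b)) :
      MemLp h 2 (volume.restrict (Ioc a b)) :=
    (memLp_two_iff_integrable_sq
      ((hh.mono Ioc_subset_Icc_self).aestronglyMeasurable measurableSet_Ioc)).2
      ((hh.pow 2).integrableOn_Icc.mono_set Ioc_subset_Icc_self)
  simpa only [intervalIntegral.integral_of_le hab] using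
    sq_integral_mul_le (memLp_two hf) (memLp_two hg)

variable {a b : ℝ} {p p' u u' u'' : ℝ → ℝ}

theorem integral_weight_mul_deriv_sq_eq_neg
    (hp : ∀ x ∈ uIcc a b, HasDerivWithinAt p (p' x) (uIcc a b) x)
    (hu : ∀ x ∈ uIcc a b, HasDerivWithinAt u (u' x) (uIcc a b) x)
    (hu' : ∀ x ∈ uIcc a b, HasDerivWithinAt u' (u'' x) (uIcc a b) x)
    (hp'_int : IntervalIntegrable p' volume a b) (hu''_int : IntervalIntegrable u'' volume a b)
    (hpa : p a = 0) (hpb : p b = 0) :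
    ∫ x in a..b, p x * u' x ^ 2 = -∫ x in a..b, u x * (p' x * u' x + p x * u'' x) := by
  have hp_cont : ContinuousOn p (uIcc a b) := HasDerivWithinAt.continuousOn hp
  have hu'_cont : ContinuousOn u' (uIcc a b) := HasDerivWithinAt.continuousOn hu'
  rw [intervalIntegral.integral_mul_deriv_eq_deriv_mul_of_hasDerivWithinAt hu
    (fun x hx => (hp x hx).mul (hu' x hx)) hu'_cont.intervalIntegrable
    ((hp'_int.mul_continuousOn hu'_cont).add (hu''_int.continuousOn_mul hp_cont))]
  simp only [Pi.mul_apply, hpa, hpb, zero_mul, mul_zero, sub_zero, zero_sub, neg_neg]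
  exact intervalIntegral.integral_congr fun x _ => by ring

theorem integral_mul_add_mul_sq_le {q v w : ℝ → ℝ} {M K : ℝ} (hab : a ≤ b)
    (hp : ContinuousOn p (Icc a b)) (hq : ContinuousOn q (Icc a b))
    (hv : ContinuousOn v (Icc a b)) (hw : ContinuousOn w (Icc a b))
    (hq_le : ∀ x ∈ Icc a b, |q x| ≤ M) (hp_nonneg : ∀ x ∈ Icc a b, 0 ≤ p x)
    (hp_le : ∀ x ∈ Icc a b, p x ≤ K) :
    ∫ x in a..b, (q x * v x + p x * w x) ^ 2
      ≤ 2 * (M ^ 2 * (∫ x in a..b, v x ^ 2) + K * ∫ x in a..b, p x * w x ^ 2) := by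
  have pointwise : ∀ x ∈ Icc a b, (q x * v x + p x * w x) ^ 2
      ≤ 2 * (M ^ 2 * v x ^ 2 + K * (p x * w x ^ 2)) := fun x hx =>
    calc (q x * v x + p x * w x) ^ 2
        ≤ 2 * ((q x * v x) ^ 2 + (p x * w x) ^ 2) := add_sq_le
      _ = 2 * (q x ^ 2 * v x ^ 2 + p x * (p x * w x ^ 2)) := by ring
      _ ≤ 2 * (M ^ 2 * v x ^ 2 + K * (p x * w x ^ 2)) := by
          have hq_sq : q x ^ 2 ≤ M ^ 2 := sq_le_sq.2 ((hq_le x hx).trans (le_abs_self M))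
          have hpw : 0 ≤ p x * w x ^ 2 := mul_nonneg (hp_nonneg x hx) (sq_nonneg (w x))
          gcongr
          exact hp_le x hx
  have hv_int : IntervalIntegrable (fun x => v x ^ 2) volume a b :=
    (hv.pow 2).intervalIntegrable_of_Icc hab
  have hw_int : IntervalIntegrable (fun x => p x * w x ^ 2) volume a b :=
    (hp.mul (hw.pow 2)).intervalIntegrable_of_Icc hab
  calc ∫ x in a..b, (q x * v x + p x * w x) ^ 2
      ≤ ∫ x in a..b, 2 * (M ^ 2 * v x ^ 2 + K * (p x * w x ^ 2)) :=
        intervalIntegral.integral_mono_on hab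
          (ContinuousOn.intervalIntegrable_of_Icc hab (by fun_prop))
          (((hv_int.const_mul _).add (hw_int.const_mul _)).const_mul _) pointwise
    _ = 2 * (M ^ 2 * (∫ x in a..b, v x ^ 2) + K * ∫ x in a..b, p x * w x ^ 2) := by
        rw [intervalIntegral.integral_const_mul,
          intervalIntegral.integral_add (hv_int.const_mul _) (hw_int.const_mul _),
          intervalIntegral.integral_const_mul, intervalIntegral.integral_const_mul]

theorem sq_integral_weight_mul_deriv_sq_le {M K : ℝ} (hab : a ≤ b)
    (hp : ∀ x ∈ Icc a b, HasDerivWithinAt p (p' x) (Icc a b) x)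
    (hu : ∀ x ∈ Icc a b, HasDerivWithinAt u (u' x) (Icc a b) x)
    (hu' : ∀ x ∈ Icc a b, HasDerivWithinAt u' (u'' x) (Icc a b) x)
    (hp'_cont : ContinuousOn p' (Icc a b)) (hu''_cont : ContinuousOn u'' (Icc a b))
    (hpa : p a = 0) (hpb : p b = 0) (hp'_le : ∀ x ∈ Icc a b, |p' x| ≤ M)
    (hp_nonneg : ∀ x ∈ Icc a b, 0 ≤ p x) (hp_le : ∀ x ∈ Icc a b, p x ≤ K) :
    (∫ x in a..b, p x * u' x ^ 2) ^ 2 ≤ (∫ x in a..b, u x ^ 2) *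
      (2 * (M ^ 2 * (∫ x in a..b, u' x ^ 2) + K * ∫ x in a..b, p x * u'' x ^ 2)) := by
  have hp_cont : ContinuousOn p (Icc a b) := HasDerivWithinAt.continuousOn hp
  have hu_cont : ContinuousOn u (Icc a b) := HasDerivWithinAt.continuousOn hu
  have hu'_cont : ContinuousOn u' (Icc a b) := HasDerivWithinAt.continuousOn hu'
  have by_parts : ∫ x in a..b, p x * u' x ^ 2
      = -∫ x in a..b, u x * (p' x * u' x + p x * u'' x) := by
    rw [← uIcc_of_le hab] at hp hu hu'
    exact integral_weight_mul_deriv_sq_eq_neg hp hu hu' (hp'_cont.intervalIntegrable_of_Icc hab)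
      (hu''_cont.intervalIntegrable_of_Icc hab) hpa hpb
  calc (∫ x in a..b, p x * u' x ^ 2) ^ 2
      = (∫ x in a..b, u x * (p' x * u' x + p x * u'' x)) ^ 2 := by rw [by_parts, neg_sq]
    _ ≤ (∫ x in a..b, u x ^ 2) * ∫ x in a..b, (p' x * u' x + p x * u'' x) ^ 2 :=
        sq_intervalIntegral_mul_le hab hu_cont
          ((hp'_cont.mul hu'_cont).add (hp_cont.mul hu''_cont))
    _ ≤ _ := mul_le_mul_of_nonneg_left
        (integral_mul_add_mul_sq_le hab hp_cont hp'_cont hu'_cont hu''_cont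
          hp'_le hp_nonneg hp_le)
        (intervalIntegral.integral_nonneg hab fun x _ => sq_nonneg (u x))

end Interpolation

theorem rpow_half_le_of_sq_le {x c d e : ℝ} (hx : 0 ≤ x) (hc : 0 ≤ c) (hd : 0 ≤ d) (he : 0 ≤ e)
    (h : x ^ 2 ≤ c * d * e) :
    x ^ ((1 : ℝ) / 2) ≤ c ^ ((1 : ℝ) / 4) * d ^ ((1 : ℝ) / 4) * e ^ ((1 : ℝ) / 4) := by
  calc x ^ ((1 : ℝ) / 2) = (x ^ 2) ^ ((1 : ℝ) / 4) := by
        rw [← Real.rpow_natCast_mul hx]; norm_num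
    _ ≤ (c * d * e) ^ ((1 : ℝ) / 4) := by gcongr
    _ = c ^ ((1 : ℝ) / 4) * d ^ ((1 : ℝ) / 4) * e ^ ((1 : ℝ) / 4) := by
        rw [Real.mul_rpow (mul_nonneg hc hd) he, Real.mul_rpow hc hd]

theorem setIntegral_Ioo_eq_intervalIntegral {E : Type*} [NormedAddCommGroup E] [NormedSpace ℝ E]
    {a b : ℝ} (hab : a ≤ b) (f : ℝ → E) : ∫ x in Ioo a b, f x = ∫ x in a..b, f x := by
  rw [intervalIntegral.integral_of_le hab, integral_Ioc_eq_integral_Ioo]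

theorem one_sub_sq_nonneg_of_mem_Icc {y : ℝ} (hy : y ∈ Icc (-1) 1) : 0 ≤ 1 - y ^ 2 :=
  sub_nonneg.2 ((sq_le_one_iff_abs_le_one y).2 (abs_le.2 hy))

theorem integral_one_sub_sq_mul_sq_nonneg (f : ℝ → ℝ) :
    0 ≤ ∫ y in Ioo (-1 : ℝ) 1, (1 - y ^ 2) * f y ^ 2 :=
  setIntegral_nonneg measurableSet_Ioo fun y hy =>
    mul_nonneg (one_sub_sq_nonneg_of_mem_Icc (Ioo_subset_Icc_self hy)) (sq_nonneg (f y))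

theorem energy_nonneg (g : ℝ → ℝ) : 0 ≤ energy g :=
  mul_nonneg one_half_pos.le (integral_nonneg fun y => sq_nonneg (dI g y))

theorem dissipation_nonneg (g : ℝ → ℝ) : 0 ≤ dissipation g :=
  add_nonneg (mul_nonneg (by norm_num) (integral_nonneg fun y => sq_nonneg (dI (dI g) y)))
    (mul_nonneg one_half_pos.le (integral_one_sub_sq_mul_sq_nonneg _))

theorem contDiffOn_dI {f : ℝ → ℝ} {m n : WithTop ℕ∞} (hf : ContDiffOn ℝ n f (Icc (-1) 1))
    (hmn : m + 1 ≤ n) : ContDiffOn ℝ m (dI f) (Icc (-1) 1) :=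
  hf.derivWithin (uniqueDiffOn_Icc (by norm_num)) hmn

theorem hasDerivWithinAt_dI {f : ℝ → ℝ} {y : ℝ}
    (hf : DifferentiableWithinAt ℝ f (Icc (-1) 1) y) :
    HasDerivWithinAt f (dI f y) (Icc (-1) 1) y :=
  hf.hasDerivWithinAt

theorem sq_integral_one_sub_sq_mul_deriv_sq_le {u : ℝ → ℝ}
    (hu : ContDiffOn ℝ 2 u (Icc (-1) 1)) :
    (∫ y in Ioo (-1 : ℝ) 1, (1 - y ^ 2) * dI u y ^ 2) ^ 2 ≤ (∫ y in Ioo (-1 : ℝ) 1, u y ^ 2) *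
      (2 * (4 * (∫ y in Ioo (-1 : ℝ) 1, dI u y ^ 2)
        + ∫ y in Ioo (-1 : ℝ) 1, (1 - y ^ 2) * dI (dI u) y ^ 2)) := by
  have hu' : ContDiffOn ℝ 1 (dI u) (Icc (-1) 1) := contDiffOn_dI hu (by norm_num)
  have hu'' : ContDiffOn ℝ 0 (dI (dI u)) (Icc (-1) 1) := contDiffOn_dI hu' (by norm_num)
  have hp (y : ℝ) : HasDerivWithinAt (fun y : ℝ => 1 - y ^ 2) (-(2 * y)) (Icc (-1) 1) y := by
    simpa using ((hasDerivAt_pow 2 y).const_sub 1).hasDerivWithinAt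
  have hp'_le : ∀ y ∈ Icc (-1 : ℝ) 1, |-(2 * y)| ≤ 2 := fun y hy => by
    rw [abs_neg, abs_le]
    constructor <;> linarith [hy.1, hy.2]
  have interpolation := sq_integral_weight_mul_deriv_sq_le (by norm_num) (fun y _ => hp y)
    (fun y hy => hasDerivWithinAt_dI (hu.differentiableOn two_ne_zero y hy))
    (fun y hy => hasDerivWithinAt_dI (hu'.differentiableOn one_ne_zero y hy))
    (by fun_prop) hu''.continuousOn (by norm_num) (by norm_num) hp'_le
    (fun y hy => one_sub_sq_nonneg_of_mem_Icc hy) (fun y _ => sub_le_self 1 (sq_nonneg y))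
  have h_Ioo (f : ℝ → ℝ) : ∫ y in Ioo (-1 : ℝ) 1, f y = ∫ y in (-1 : ℝ)..1, f y :=
    setIntegral_Ioo_eq_intervalIntegral (by norm_num) f
  have two_sq : (2 : ℝ) ^ 2 = 4 := by norm_num
  simpa only [h_Ioo, two_sq, one_mul] using interpolation

theorem sq_integral_one_sub_sq_mul_sq_le_energy_mul_dissipation {g : ℝ → ℝ}
    (hg : ContDiffOn ℝ 3 g (Icc (-1) 1)) :
    (∫ y in Ioo (-1 : ℝ) 1, (1 - y ^ 2) * dI (dI g) y ^ 2) ^ 2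
      ≤ 8 * energy g * dissipation g := by
  refine (sq_integral_one_sub_sq_mul_deriv_sq_le (contDiffOn_dI hg (by norm_num))).trans ?_
  rw [energy, dissipation]
  set A := ∫ y in Ioo (-1 : ℝ) 1, dI g y ^ 2
  set V := ∫ y in Ioo (-1 : ℝ) 1, dI (dI g) y ^ 2
  set W := ∫ y in Ioo (-1 : ℝ) 1, (1 - y ^ 2) * dI (dI (dI g)) y ^ 2
  have hA : 0 ≤ A := integral_nonneg fun y => sq_nonneg (dI g y)
  have hV : 0 ≤ V := integral_nonneg fun y => sq_nonneg (dI (dI g) y)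
  calc A * (2 * (4 * V + W)) ≤ A * (32 * V + 2 * W) :=
        mul_le_mul_of_nonneg_left (by linarith) hA
    _ = 8 * (1 / 2 * A) * (8 * V + 1 / 2 * W) := by ring

theorem weighted_second_deriv_L2_general {g : ℝ → ℝ} (hg : ContDiffOn ℝ 3 g (Icc (-1) 1)) :
    (∫ y in Ioo (-1 : ℝ) 1, (1 - y ^ 2) * dI (dI g) y ^ 2) ^ ((1 : ℝ) / 2) ≤
      8 ^ ((1 : ℝ) / 4) * energy g ^ ((1 : ℝ) / 4) * dissipation g ^ ((1 : ℝ) / 4) :=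
  rpow_half_le_of_sq_le (integral_one_sub_sq_mul_sq_nonneg _) (by norm_num)
    (energy_nonneg g) (dissipation_nonneg g)
    (sq_integral_one_sub_sq_mul_sq_le_energy_mul_dissipation hg)

/-- **Lemma 3.10 (iv)**: `‖√(1-y²) g''‖_{L²(-1,1)} ≲ E(g)^{1/4} D(g)^{1/4}`. -/
theorem weighted_second_deriv_L2 :
    ∃ C > (0:ℝ), ∀ g : ℝ → ℝ, ContDiffOn ℝ 3 g (Icc (-1) 1) →
      g (-1) = 0 → g 1 = 0 →
      (∫ y in Ioo (-1:ℝ) 1, (1 - y ^ 2) * (dI (dI g) y) ^ 2) ^ ((1:ℝ)/2) ≤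
        C * energy g ^ ((1:ℝ)/4) * dissipation g ^ ((1:ℝ)/4) := by
  exact ⟨8 ^ ((1 : ℝ) / 4), by positivity, fun _ hg _ _ => weighted_second_deriv_L2_general hg⟩
end

section
/- For every $2 \le p < \infty$ there exists a constant $C = C(p) > 0$ such that for every function $g$ three times continuously differentiable on $[-1,1]$ with $g(-1)=g(1)=0$, one has $\|g''\|_{L^p(-1,1)} \le C\, D(g)^{1/2}$. -/
open MeasureTheory Set
open scoped ENNReal

/-!
On `(-1, 1)` the function `artanh` is a primitive of `1 / (1 - y ^ 2)`, so the weighted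
Cauchy–Schwarz inequality gives, for `f = g''`,
`(f x - f y) ^ 2 ≤ |artanh x - artanh y| * ∫ (1 - t ^ 2) * f' t ^ 2`.
Some `y` with `|y| ≤ 1 / 2` has `f y ^ 2` at most its mean, and there `|artanh y| ≤ 1`. Hence `f`
is bounded pointwise by `√D(g) * (|artanh x| + 3)`, and the singularities of `artanh` at `±1` are
logarithmic, so `artanh` lies in every `L^p` with `p < ∞`.
-/

theorem sq_integral_le_integral_inv_mul_integral_mul_sq {α : Type*} [MeasurableSpace α]
    {μ : Measure α} {w h : α → ℝ} (hw : ∀ᵐ x ∂μ, 0 < w x) (hh : Integrable h μ)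
    (hwinv : Integrable (fun x ↦ (w x)⁻¹) μ) (hwh : Integrable (fun x ↦ w x * h x ^ 2) μ) :
    (∫ x, h x ∂μ) ^ 2 ≤ (∫ x, (w x)⁻¹ ∂μ) * ∫ x, w x * h x ^ 2 ∂μ := by
  have quadratic_nonneg (s : ℝ) : 0 ≤ (∫ x, (w x)⁻¹ ∂μ) * (s * s) + (-2 * ∫ x, h x ∂μ) * s +
      ∫ x, w x * h x ^ 2 ∂μ :=
    calc
      0 ≤ ∫ x, (w x)⁻¹ * (s - w x * h x) ^ 2 ∂μ :=
        integral_nonneg_of_ae (hw.mono fun x hx ↦ by positivity)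
      _ = ∫ x, (w x)⁻¹ * (s * s) + (-2 * h x) * s + w x * h x ^ 2 ∂μ :=
        integral_congr_ae (hw.mono fun x hx ↦ by field_simp; ring)
      _ = _ := by
        have hlin : Integrable (fun x ↦ -2 * h x * s) μ := (hh.const_mul _).mul_const _
        have hquad : Integrable (fun x ↦ (w x)⁻¹ * (s * s) + -2 * h x * s) μ :=
          (hwinv.mul_const _).add hlin
        rw [integral_add hquad hwh, integral_add (hwinv.mul_const _) hlin,
          integral_mul_const, integral_mul_const, integral_const_mul]
  have discrim_nonpos := discrim_le_zero quadratic_nonneg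
  rw [discrim] at discrim_nonpos
  linarith

theorem sq_sub_le_sub_mul_integral_mul_deriv_sq {a b : ℝ} {w φ f f' : ℝ → ℝ} (hab : a ≤ b)
    (hw : ∀ t ∈ Icc a b, 0 < w t) (hw_cont : ContinuousOn w (Icc a b))
    (hφ : ∀ t ∈ Icc a b, HasDerivAt φ (w t)⁻¹ t) (hf : ∀ t ∈ Icc a b, HasDerivAt f (f' t) t)
    (hf' : ContinuousOn f' (Icc a b)) :
    (f b - f a) ^ 2 ≤ (φ b - φ a) * ∫ t in a..b, w t * f' t ^ 2 := by
  have hwinv : ContinuousOn (fun t ↦ (w t)⁻¹) (Icc a b) := hw_cont.inv₀ fun t ht ↦ (hw t ht).ne'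
  have hwf : ContinuousOn (fun t ↦ w t * f' t ^ 2) (Icc a b) := hw_cont.mul (hf'.pow 2)
  rw [← intervalIntegral.integral_eq_sub_of_hasDerivAt (by rwa [uIcc_of_le hab])
      (hf'.intervalIntegrable_of_Icc hab),
    ← intervalIntegral.integral_eq_sub_of_hasDerivAt (by rwa [uIcc_of_le hab])
      (hwinv.intervalIntegrable_of_Icc hab)]
  simp only [intervalIntegral.integral_of_le hab]
  exact sq_integral_le_integral_inv_mul_integral_mul_sq
    (ae_restrict_of_forall_mem measurableSet_Ioc fun t ht ↦ hw t (Ioc_subset_Icc_self ht))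
    (hf'.integrableOn_Icc.mono_set Ioc_subset_Icc_self)
    (hwinv.integrableOn_Icc.mono_set Ioc_subset_Icc_self)
    (hwf.integrableOn_Icc.mono_set Ioc_subset_Icc_self)

theorem artanh_eq_half_log_sub_log {x : ℝ} (hx : x ∈ Ioo (-1) 1) :
    Real.artanh x = 1 / 2 * (Real.log (1 + x) - Real.log (1 - x)) := by
  rw [Real.artanh_eq_half_log (Ioo_subset_Icc_self hx),
    Real.log_div (by linarith [hx.1]) (by linarith [hx.2])]

theorem hasDerivAt_artanh {x : ℝ} (hx : x ∈ Ioo (-1) 1) :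
    HasDerivAt Real.artanh (1 - x ^ 2)⁻¹ x := by
  have hadd : 0 < 1 + x := by linarith [hx.1]
  have hsub : 0 < 1 - x := by linarith [hx.2]
  have hlog : HasDerivAt (fun y ↦ 1 / 2 * (Real.log (1 + y) - Real.log (1 - y)))
      (1 / 2 * (1 / (1 + x) - -1 / (1 - x))) x :=
    ((((hasDerivAt_id x).const_add 1).log hadd.ne').sub
      (((hasDerivAt_id x).const_sub 1).log hsub.ne')).const_mul _
  have hvalue : 1 / 2 * (1 / (1 + x) - -1 / (1 - x)) = (1 - x ^ 2)⁻¹ := by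
    rw [show 1 - x ^ 2 = (1 + x) * (1 - x) by ring]
    field_simp
    ring
  rw [← hvalue]
  exact hlog.congr_of_eventuallyEq <| Filter.eventuallyEq_of_mem (Ioo_mem_nhds hx.1 hx.2)
    fun y hy ↦ artanh_eq_half_log_sub_log hy

theorem abs_artanh_le_abs_div_one_sub_abs {x : ℝ} (hx : x ∈ Ioo (-1) 1) :
    |Real.artanh x| ≤ |x| / (1 - |x|) := by
  have hadd : 0 < 1 + x := by linarith [hx.1]
  have hsub : 0 < 1 - x := by linarith [hx.2]
  have hratio : 0 < (1 + x) / (1 - x) := div_pos hadd hsub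
  rw [Real.artanh_eq_half_log (Ioo_subset_Icc_self hx)]
  have hupper : 1 / 2 * Real.log ((1 + x) / (1 - x)) ≤ x / (1 - x) :=
    calc
      _ ≤ 1 / 2 * ((1 + x) / (1 - x) - 1) := by gcongr; exact Real.log_le_sub_one_of_pos hratio
      _ = x / (1 - x) := by field_simp; ring
  have hlower : x / (1 + x) ≤ 1 / 2 * Real.log ((1 + x) / (1 - x)) :=
    calc
      x / (1 + x) = 1 / 2 * (1 - ((1 + x) / (1 - x))⁻¹) := by field_simp; ring
      _ ≤ _ := by gcongr; exact Real.one_sub_inv_le_log_of_pos hratio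
  rcases le_total 0 x with h | h
  · rw [abs_of_nonneg h, abs_of_nonneg ((div_nonneg h hadd.le).trans hlower)]
    exact hupper
  · rw [abs_of_nonpos h, abs_of_nonpos (hupper.trans (div_nonpos_of_nonpos_of_nonneg h hsub.le)),
      sub_neg_eq_add, neg_div]
    exact neg_le_neg hlower

theorem memLp_log_Ioo (b : ℝ) {p : ℝ≥0∞} (hp : p ≠ ∞) :
    MemLp Real.log p (volume.restrict (Ioo 0 b)) := by
  lift p to NNReal using hp
  -- `log` has exponential moments: `exp (t * log x) = x ^ t` is integrable on `(0, b)` if `-1 < t`.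
  refine ProbabilityTheory.memLp_of_mem_interior_integrableExpSet
    (mem_interior_iff_mem_nhds.mpr <| Filter.mem_of_superset (Ioi_mem_nhds neg_one_lt_zero) ?_) p
  intro t (ht : -1 < t)
  have hrpow : IntegrableOn (fun x : ℝ ↦ x ^ t) (Ioo 0 b) :=
    (intervalIntegral.intervalIntegrable_rpow' ht).1.mono_set Ioo_subset_Ioc_self
  exact hrpow.congr_fun (fun x hx ↦ by
    simp only [Real.rpow_def_of_pos hx.1, mul_comm]) measurableSet_Ioo

theorem memLp_artanh {p : ℝ≥0∞} (hp : p ≠ ∞) :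
    MemLp Real.artanh p (volume.restrict (Ioo (-1) 1)) := by
  have hlog := memLp_log_Ioo 2 hp
  have hadd_preimage : (fun x : ℝ ↦ 1 + x) ⁻¹' Ioo 0 2 = Ioo (-1) 1 := by
    rw [preimage_const_add_Ioo]; norm_num
  have hsub_preimage : (fun x : ℝ ↦ 1 - x) ⁻¹' Ioo 0 2 = Ioo (-1) 1 := by
    rw [preimage_const_sub_Ioo]; norm_num
  have hadd : MemLp (fun x ↦ Real.log (1 + x)) p (volume.restrict (Ioo (-1) 1)) :=
    hadd_preimage ▸ hlog.comp_measurePreserving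
      ((measurePreserving_add_left volume 1).restrict_preimage measurableSet_Ioo)
  have hsub : MemLp (fun x ↦ Real.log (1 - x)) p (volume.restrict (Ioo (-1) 1)) :=
    hsub_preimage ▸ hlog.comp_measurePreserving
      ((Measure.measurePreserving_sub_left volume 1).restrict_preimage measurableSet_Ioo)
  exact ((hadd.sub hsub).const_mul (1 / 2)).ae_eq <|
    ae_restrict_of_forall_mem measurableSet_Ioo fun x hx ↦ (artanh_eq_half_log_sub_log hx).symm

theorem setIntegral_one_sub_sq_mul_sq_nonneg (u : ℝ → ℝ) :
    0 ≤ ∫ t in Ioo (-1) 1, (1 - t ^ 2) * u t ^ 2 :=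
  setIntegral_nonneg measurableSet_Ioo fun t ht ↦
    mul_nonneg (by nlinarith [ht.1, ht.2]) (sq_nonneg _)

theorem exists_abs_le_half_abs_apply_le_sqrt {f : ℝ → ℝ}
    (hf_int : IntegrableOn (fun t ↦ f t ^ 2) (Ioo (-1) 1)) :
    ∃ y : ℝ, |y| ≤ 1 / 2 ∧ |f y| ≤ √(∫ t in Ioo (-1) 1, f t ^ 2) := by
  have hsub : Icc (-(1 / 2)) (1 / 2) ⊆ Ioo (-1 : ℝ) 1 :=
    Icc_subset_Ioo (by norm_num) (by norm_num)
  obtain ⟨y, hy, hfy⟩ := exists_le_setAverage (by norm_num) (by norm_num) (hf_int.mono_set hsub)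
  refine ⟨y, abs_le.mpr hy, Real.abs_le_sqrt (hfy.trans ?_)⟩
  have hvol : volume.real (Icc (-(1 / 2) : ℝ) (1 / 2)) = 1 := by norm_num
  rw [setAverage_eq, hvol, inv_one, one_smul]
  exact setIntegral_mono_set hf_int (Filter.Eventually.of_forall fun t ↦ sq_nonneg _)
    hsub.eventuallyLE

section PointwiseBound

variable {f f' : ℝ → ℝ} (hf : ∀ t ∈ Ioo (-1) 1, HasDerivAt f (f' t) t)
  (hf' : ContinuousOn f' (Ioo (-1) 1))
  (hf'_int : IntegrableOn (fun t ↦ (1 - t ^ 2) * f' t ^ 2) (Ioo (-1) 1))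
include hf hf' hf'_int

theorem sq_sub_le_abs_artanh_sub_mul_integral {x y : ℝ} (hx : x ∈ Ioo (-1) 1)
    (hy : y ∈ Ioo (-1) 1) :
    (f x - f y) ^ 2 ≤
      |Real.artanh x - Real.artanh y| * ∫ t in Ioo (-1) 1, (1 - t ^ 2) * f' t ^ 2 := by
  wlog hyx : y ≤ x generalizing x y
  · rw [sub_sq_comm, abs_sub_comm]
    exact this hy hx (le_of_not_ge hyx)
  have hsub : Icc y x ⊆ Ioo (-1) 1 := Icc_subset_Ioo hy.1 hx.2
  have hweight : ∀ t ∈ Ioo (-1 : ℝ) 1, 0 < 1 - t ^ 2 := fun t ht ↦ by nlinarith [ht.1, ht.2]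
  have hle : ∫ t in y..x, (1 - t ^ 2) * f' t ^ 2 ≤
      ∫ t in Ioo (-1) 1, (1 - t ^ 2) * f' t ^ 2 := by
    rw [intervalIntegral.integral_of_le hyx]
    exact setIntegral_mono_set hf'_int
      (ae_restrict_of_forall_mem measurableSet_Ioo fun t ht ↦
        mul_nonneg (hweight t ht).le (sq_nonneg _))
      (Ioc_subset_Icc_self.trans hsub).eventuallyLE
  calc
    (f x - f y) ^ 2
      ≤ (Real.artanh x - Real.artanh y) * ∫ t in y..x, (1 - t ^ 2) * f' t ^ 2 :=
        sq_sub_le_sub_mul_integral_mul_deriv_sq hyx (fun t ht ↦ hweight t (hsub ht))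
          (by fun_prop) (fun t ht ↦ hasDerivAt_artanh (hsub ht)) (fun t ht ↦ hf t (hsub ht))
          (hf'.mono hsub)
    _ ≤ |Real.artanh x - Real.artanh y| * ∫ t in Ioo (-1) 1, (1 - t ^ 2) * f' t ^ 2 := by
        gcongr
        · exact intervalIntegral.integral_nonneg hyx fun t ht ↦
            mul_nonneg (hweight t (hsub ht)).le (sq_nonneg _)
        · exact le_abs_self _

theorem abs_le_sqrt_integral_sq_add_sqrt_artanh
    (hf_int : IntegrableOn (fun t ↦ f t ^ 2) (Ioo (-1) 1)) {x : ℝ} (hx : x ∈ Ioo (-1) 1) :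
    |f x| ≤ √(∫ t in Ioo (-1) 1, f t ^ 2) +
      √((|Real.artanh x| + 1) * ∫ t in Ioo (-1) 1, (1 - t ^ 2) * f' t ^ 2) := by
  obtain ⟨y, hy, hfy⟩ := exists_abs_le_half_abs_apply_le_sqrt hf_int
  have hy_mem : y ∈ Ioo (-1) 1 := abs_lt.mp (by linarith)
  have hB : 0 ≤ ∫ t in Ioo (-1) 1, (1 - t ^ 2) * f' t ^ 2 :=
    setIntegral_one_sub_sq_mul_sq_nonneg f'
  have hosc : |f x - f y| ≤
      √((|Real.artanh x| + 1) * ∫ t in Ioo (-1) 1, (1 - t ^ 2) * f' t ^ 2) := by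
    refine Real.abs_le_sqrt <|
      (sq_sub_le_abs_artanh_sub_mul_integral hf hf' hf'_int hx hy_mem).trans ?_
    gcongr
    have hy_artanh : |Real.artanh y| ≤ 1 :=
      (abs_artanh_le_abs_div_one_sub_abs hy_mem).trans <|
        div_le_one_of_le₀ (by linarith) (by linarith)
    linarith [abs_sub (Real.artanh x) (Real.artanh y)]
  linarith [abs_sub_abs_le_abs_sub (f x) (f y)]

end PointwiseBound

theorem hasDerivAt_dI {f : ℝ → ℝ} {x : ℝ} (hx : x ∈ Ioo (-1) 1) (hf : DifferentiableAt ℝ f x) :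
    HasDerivAt f (dI f x) x := by
  rw [dI, derivWithin_of_mem_nhds (Icc_mem_nhds hx.1 hx.2)]
  exact hf.hasDerivAt

theorem contDiffOn_dI_Icc {m n : WithTop ℕ∞} {f : ℝ → ℝ} (hf : ContDiffOn ℝ n f (Icc (-1) 1))
    (hmn : m + 1 ≤ n) : ContDiffOn ℝ m (dI f) (Icc (-1) 1) :=
  hf.derivWithin (uniqueDiffOn_Icc (by norm_num)) hmn

theorem contDiffOn_dI_Ioo {m n : WithTop ℕ∞} {f : ℝ → ℝ} (hf : ContDiffOn ℝ n f (Ioo (-1) 1))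
    (hmn : m + 1 ≤ n) : ContDiffOn ℝ m (dI f) (Ioo (-1) 1) :=
  (hf.deriv_of_isOpen isOpen_Ioo hmn).congr fun _ hx ↦
    derivWithin_of_mem_nhds (Icc_mem_nhds hx.1 hx.2)

section Dissipation

variable {g : ℝ → ℝ}

theorem integrableOn_dI_dI_sq (hg : ContDiffOn ℝ 2 g (Icc (-1) 1)) :
    IntegrableOn (fun y ↦ dI (dI g) y ^ 2) (Ioo (-1) 1) :=
  have hcont : ContinuousOn (dI (dI g)) (Icc (-1) 1) :=
    (contDiffOn_dI_Icc (m := 0) (contDiffOn_dI_Icc (m := 1) hg (by norm_num))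
      (by norm_num)).continuousOn
  (hcont.pow 2).integrableOn_Icc.mono_set Ioo_subset_Icc_self

theorem integrableOn_one_sub_sq_mul_dI_dI_dI_sq (hg : ContDiffOn ℝ 3 g (Icc (-1) 1)) :
    IntegrableOn (fun y ↦ (1 - y ^ 2) * dI (dI (dI g)) y ^ 2) (Ioo (-1) 1) :=
  have hg₂ : ContDiffOn ℝ 1 (dI (dI g)) (Icc (-1) 1) :=
    contDiffOn_dI_Icc (contDiffOn_dI_Icc (m := 2) hg (by norm_num)) (by norm_num)
  have hcont : ContinuousOn (dI (dI (dI g))) (Icc (-1) 1) :=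
    (contDiffOn_dI_Icc (m := 0) hg₂ (by norm_num)).continuousOn
  have hweight : ContinuousOn (fun y : ℝ ↦ 1 - y ^ 2) (Icc (-1) 1) := by fun_prop
  (hweight.mul (hcont.pow 2)).integrableOn_Icc.mono_set Ioo_subset_Icc_self

theorem abs_dI_dI_le_sqrt_dissipation_mul (hg : ContDiffOn ℝ 3 g (Ioo (-1) 1))
    (hA : IntegrableOn (fun y ↦ dI (dI g) y ^ 2) (Ioo (-1) 1))
    (hB : IntegrableOn (fun y ↦ (1 - y ^ 2) * dI (dI (dI g)) y ^ 2) (Ioo (-1) 1))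
    {x : ℝ} (hx : x ∈ Ioo (-1) 1) :
    |dI (dI g) x| ≤ √(dissipation g) * (|Real.artanh x| + 3) := by
  have hg₂ : ContDiffOn ℝ 1 (dI (dI g)) (Ioo (-1) 1) :=
    contDiffOn_dI_Ioo (contDiffOn_dI_Ioo (m := 2) hg (by norm_num)) (by norm_num)
  have hderiv : ∀ t ∈ Ioo (-1) 1, HasDerivAt (dI (dI g)) (dI (dI (dI g)) t) t := fun t ht ↦
    hasDerivAt_dI ht ((hg₂.differentiableOn one_ne_zero).differentiableAt (isOpen_Ioo.mem_nhds ht))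
  have hcont : ContinuousOn (dI (dI (dI g))) (Ioo (-1) 1) :=
    (contDiffOn_dI_Ioo (m := 0) hg₂ (by norm_num)).continuousOn
  refine (abs_le_sqrt_integral_sq_add_sqrt_artanh hderiv hcont hB hA hx).trans ?_
  have hA₀ : 0 ≤ ∫ t in Ioo (-1) 1, dI (dI g) t ^ 2 := integral_nonneg fun t ↦ sq_nonneg _
  have hB₀ := setIntegral_one_sub_sq_mul_sq_nonneg (dI (dI (dI g)))
  have hA_le : ∫ t in Ioo (-1) 1, dI (dI g) t ^ 2 ≤ dissipation g := by
    rw [dissipation]; linarith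
  have hB_le : ∫ t in Ioo (-1) 1, (1 - t ^ 2) * dI (dI (dI g)) t ^ 2 ≤ 2 * dissipation g := by
    rw [dissipation]; linarith
  have hartanh : √((|Real.artanh x| + 1) * 2) ≤ |Real.artanh x| + 2 :=
    Real.sqrt_le_iff.mpr ⟨by positivity, by nlinarith [abs_nonneg (Real.artanh x)]⟩
  calc
    _ ≤ √(dissipation g) + √((|Real.artanh x| + 1) * (2 * dissipation g)) := by gcongr
    _ = √(dissipation g) * (1 + √((|Real.artanh x| + 1) * 2)) := by
        rw [← mul_assoc, Real.sqrt_mul (by positivity)]; ring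
    _ ≤ √(dissipation g) * (1 + (|Real.artanh x| + 2)) := by gcongr
    _ = √(dissipation g) * (|Real.artanh x| + 3) := by ring

end Dissipation

theorem second_deriv_Lp_le_dissipation_general {p : ℝ≥0∞} (hp : p ∈ Ioo 0 ∞) :
    ∃ C > (0:ℝ), ∀ g : ℝ → ℝ, ContDiffOn ℝ 3 g (Ioo (-1) 1) →
      IntegrableOn (fun y ↦ dI (dI g) y ^ 2) (Ioo (-1) 1) →
      IntegrableOn (fun y ↦ (1 - y ^ 2) * dI (dI (dI g)) y ^ 2) (Ioo (-1) 1) →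
      eLpNorm (dI (dI g)) p (volume.restrict (Ioo (-1) 1)) ≤
        ENNReal.ofReal (C * dissipation g ^ ((1:ℝ)/2)) := by
  set W : ℝ → ℝ := fun x ↦ |Real.artanh x| + 3
  set N := eLpNorm W p (volume.restrict (Ioo (-1) 1))
  have hN : N ≠ ∞ := ((memLp_artanh hp.2.ne).norm.add (memLp_const 3)).eLpNorm_ne_top
  refine ⟨N.toReal + 1, by positivity, fun g hg hA hB ↦ ?_⟩
  rw [← Real.sqrt_eq_rpow]
  calc
    eLpNorm (dI (dI g)) p (volume.restrict (Ioo (-1) 1))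
      ≤ ENNReal.ofReal √(dissipation g) * N := by
        refine eLpNorm_le_mul_eLpNorm_of_ae_le_mul
          (ae_restrict_of_forall_mem measurableSet_Ioo fun x hx ↦ ?_) p
        exact (abs_dI_dI_le_sqrt_dissipation_mul hg hA hB hx).trans
          (by gcongr; exact Real.le_norm_self _)
    _ = ENNReal.ofReal (N.toReal * √(dissipation g)) := by
        rw [mul_comm, ENNReal.ofReal_mul (by positivity), ENNReal.ofReal_toReal hN]
    _ ≤ ENNReal.ofReal ((N.toReal + 1) * √(dissipation g)) := by
        gcongr
        linarith

/-- **Lemma 3.10 (v)**: for `2 ≤ p < ∞`, `‖g''‖_{L^p(-1,1)} ≲ D(g)^{1/2}`. -/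
theorem second_deriv_Lp_le_dissipation (p : ℝ) (hp : 2 ≤ p) :
    ∃ C > (0:ℝ), ∀ g : ℝ → ℝ, ContDiffOn ℝ 3 g (Icc (-1) 1) →
      g (-1) = 0 → g 1 = 0 →
      eLpNorm (dI (dI g)) (ENNReal.ofReal p) (volume.restrict (Ioo (-1) 1)) ≤
        ENNReal.ofReal (C * dissipation g ^ ((1:ℝ)/2)) := by
  obtain ⟨C, hC, hbound⟩ := second_deriv_Lp_le_dissipation_general
    (p := ENNReal.ofReal p) ⟨ENNReal.ofReal_pos.mpr (by linarith), ENNReal.ofReal_lt_top⟩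
  exact ⟨C, hC, fun g hg _ _ ↦ hbound g (hg.mono Ioo_subset_Icc_self)
    (integrableOn_dI_dI_sq (hg.of_le (by norm_num))) (integrableOn_one_sub_sq_mul_dI_dI_dI_sq hg)⟩
end
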